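/- Let G be an r-partite graph with parts V_1,…,V_r of size at least n > Δ(2 − (2d+3)/r) and maximum degree at most Δ. Let I ⊆ V(G), d+1 ≤ t ≤ r, and let U be a set of r − t parts such that |I| ≤ 2(t−d−1) and I dominates every part not in U. Then for any vertex x ∈ V(G), there exists an independent transversal T' of the parts in U (one vertex per part of U, pairwise non-adjacent) with T' ∩ N_G(I ∪ {x}) = ∅. -/

import Mathlib

/-- `f` is an independent transversal of the parts in `P`, using vertices of `A`. -/
def IsIT18 {V ι : Type} (G : SimpleGraph V) (A : Set V) (part : V → ι) (P : Finset ι)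
    (f : ι → V) : Prop :=
  (∀ i ∈ P, f i ∈ A ∧ part (f i) = i) ∧ ∀ i ∈ P, ∀ j ∈ P, ¬ G.Adj (f i) (f j)

open Classical in
theorem haxell18 {V ι : Type} [Finite V] (G : SimpleGraph V) :
    ∀ (A : Set V) (part : V → ι) (P : Finset ι) (p : ι), p ∈ P →
      (¬ ∃ f, IsIT18 G A part P f) → (∃ f, IsIT18 G A part (P.erase p) f) →
      ∃ S ⊆ P, p ∈ S ∧ ∃ W : Finset V, W.card + 2 ≤ 2 * S.card ∧
        ∀ v ∈ A, part v ∈ S → ∃ w ∈ W, G.Adj v w := by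
  induction G using WellFoundedLT.induction with
  | ind G ih =>
  intro A part P p hp hno ⟨f, hf1, hf2⟩
  by_cases hv : ∃ v ∈ A, part v = p
  swap
  · refine ⟨{p}, by simpa using hp, by simp, ∅, by simp, ?_⟩
    intro v hvA hvp
    exact (hv ⟨v, hvA, by simpa using hvp⟩).elim
  obtain ⟨v, hvA, hvp⟩ := hv
  have hj : ∃ j ∈ P, j ≠ p ∧ G.Adj v (f j) := by
    by_contra hcon
    push Not at hcon
    apply hno
    refine ⟨fun i => if i = p then v else f i, ?_, ?_⟩
    · intro i hi
      by_cases h : i = p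
      · simp [h, hvA, hvp]
      · simpa [h] using hf1 i (by simp [h, hi])
    · intro i hi j hj
      by_cases h : i = p <;> by_cases h' : j = p
      · simp [h, h']
      · simpa [h, h'] using hcon j hj h'
      · simpa [h, h', G.adj_comm] using hcon i hi h
      · simpa [h, h'] using hf2 i (by simp [h, hi]) j (by simp [h', hj])
  obtain ⟨j, hjP, hjp, hadj⟩ := hj
  obtain ⟨hwA, hwj⟩ := hf1 j (by simp [hjp, hjP])
  generalize f j = w at hadj hwA hwj
  have hadj' := hadj.symm
  set G0 := G.deleteEdges {s(v, w)} with hG0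
  have h0 : ∀ a b, G0.Adj a b ↔ G.Adj a b ∧ ¬ ((a = v ∧ b = w) ∨ (a = w ∧ b = v)) := by
    intro a b
    simp [hG0, SimpleGraph.deleteEdges_adj]
  have hlt : G0 < G := by
    refine lt_of_le_of_ne (SimpleGraph.deleteEdges_le _) ?_
    intro h
    have := (h0 v w).1 (h ▸ hadj)
    simp at this
  by_cases hg : ∃ g, IsIT18 G0 A part P g
  swap
  · obtain ⟨S, hS, hpS, W, hW, hd⟩ := ih G0 hlt A part P p hp hg
      ⟨f, hf1, fun i hi j hj h => hf2 i hi j hj ((h0 _ _).1 h).1⟩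
    refine ⟨S, hS, hpS, W, hW, fun v hv hvS => ?_⟩
    obtain ⟨w, hw, h⟩ := hd v hv hvS
    exact ⟨w, hw, ((h0 _ _).1 h).1⟩
  obtain ⟨g, hg1, hg2⟩ := hg
  have hgvw : g p = v ∧ g j = w := by
    by_contra hcon
    apply hno
    refine ⟨g, hg1, fun a ha b hb h => hg2 a ha b hb ((h0 _ _).2 ⟨h, ?_⟩)⟩
    have ea := (hg1 a ha).2
    have eb := (hg1 b hb).2
    rintro (⟨h1, h2⟩ | ⟨h1, h2⟩)
    · have : a = p := by rw [← ea, h1, hvp]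
      have : b = j := by rw [← eb, h2, hwj]
      exact hcon ⟨by grind, by grind⟩
    · have : b = p := by rw [← eb, h2, hvp]
      have : a = j := by rw [← ea, h1, hwj]
      exact hcon ⟨by grind, by grind⟩
  obtain ⟨hgp, hgj⟩ := hgvw
  obtain ⟨S, hS, hpS, W, hW, hd⟩ := ih G0 hlt {u | u ∈ A ∧ ¬ G.Adj u v ∧ ¬ G.Adj u w}
    (fun u => if part u = j then p else part u) (P.erase j) p (by simp [hp, hjp.symm])
    (by
      rintro ⟨h, hh1, hh2⟩
      have key : ∀ a ∈ P, a ≠ j → ∀ b ∈ P, b ≠ j → ¬ G.Adj (h a) (h b) := by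
        intro a ha haj b hb hbj hab
        refine hh2 a (by simp [ha, haj]) b (by simp [hb, hbj]) ((h0 _ _).2 ⟨hab, ?_⟩)
        have ea := (hh1 a (by simp [ha, haj])).1
        rintro (⟨h1, h2⟩ | ⟨h1, h2⟩)
        · rw [h1] at ea; exact ea.2.2 hadj
        · rw [h1] at ea; exact ea.2.1 hadj'
      have hpart : ∀ a ∈ P, a ≠ j → a ≠ p → part (h a) = a := by
        intro a ha haj hap
        have := (hh1 a (by simp [ha, haj])).2
        by_cases hc : part (h a) = j
        · simp only [hc, if_true] at this; exact (hap this.symm).elim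
        · simpa [hc] using this
      have hm : ∀ a ∈ P, a ≠ j → h a ∈ A ∧ ¬ G.Adj (h a) v ∧ ¬ G.Adj (h a) w :=
        fun a ha haj => (hh1 a (by simp [ha, haj])).1
      have hm' : ∀ a ∈ P, a ≠ j → ¬ G.Adj v (h a) ∧ ¬ G.Adj w (h a) :=
        fun a ha haj => ⟨fun q => (hm a ha haj).2.1 q.symm, fun q => (hm a ha haj).2.2 q.symm⟩
      apply hno
      by_cases hc : part (h p) = j
      · refine ⟨fun i => if i = j then h p else if i = p then v else h i, ?_, ?_⟩
        · intro i hi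
          by_cases h1 : i = j
          · simp [h1, hc, (hm p hp hjp.symm).1]
          · by_cases h2 : i = p
            · simp [h2, hjp.symm, hvA, hvp]
            · simp [h1, h2, hpart i hi h1 h2, (hm i hi h1).1]
        · intro a ha b hb
          have := hm p hp hjp.symm
          have := hm' p hp hjp.symm
          dsimp only
          split_ifs <;> first | exact G.irrefl | grind
      · have hpp : part (h p) = p := by
          have := (hh1 p (by simp [hp, hjp.symm])).2
          simpa [hc] using this
        refine ⟨fun i => if i = j then w else h i, ?_, ?_⟩
        · intro i hi
          by_cases h1 : i = j
          · simp [h1, hwA, hwj]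
          · by_cases h2 : i = p
            · simp [h2, hjp.symm, hpp, (hm p hp hjp.symm).1]
            · simp [h1, hpart i hi h1 h2, (hm i hi h1).1]
        · intro a ha b hb
          dsimp only
          split_ifs <;> first | exact G.irrefl | grind)
    (by
      refine ⟨g, ?_, ?_⟩
      · intro i hi
        simp only [Finset.mem_erase] at hi
        obtain ⟨hip, hij, hiP⟩ := hi
        have e := (hg1 i hiP).2
        have n1 : g i ≠ v := fun q => hip (by rw [← e, q, hvp])
        have n2 : g i ≠ w := fun q => hij (by rw [← e, q, hwj])
        refine ⟨⟨(hg1 i hiP).1, fun q => hg2 i hiP p hp ?_, fun q => hg2 i hiP j hjP ?_⟩, ?_⟩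
        · rw [h0, hgp]; exact ⟨q, by simp [n1, n2]⟩
        · rw [h0, hgj]; exact ⟨q, by simp [n1, n2]⟩
        · simp [e, hij]
      · intro a ha b hb
        simp only [Finset.mem_erase] at ha hb
        exact hg2 a ha.2.2 b hb.2.2)
  have hjS : j ∉ S := fun q => by simpa using hS q
  refine ⟨insert j S, ?_, by simp [hpS], W ∪ {v, w}, ?_, ?_⟩
  · intro i hi
    rcases Finset.mem_insert.1 hi with rfl | hi
    · exact hjP
    · exact Finset.mem_of_mem_erase (hS hi)
  · rw [Finset.card_insert_of_notMem hjS]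
    have := Finset.card_union_le W {v, w}
    have := Finset.card_le_two (a := v) (b := w)
    omega
  · intro u hu huS
    by_cases h1 : G.Adj u v
    · exact ⟨v, by simp, h1⟩
    by_cases h2 : G.Adj u w
    · exact ⟨w, by simp, h2⟩
    obtain ⟨z, hz, hz'⟩ := hd u ⟨hu, h1, h2⟩ (by
      split_ifs with q
      · exact hpS
      · simpa [q] using huS)
    exact ⟨z, by simp [hz], ((h0 _ _).1 hz').1⟩

open Classical in
theorem haxell18' {V ι : Type} [Finite V] [Nonempty V] (G : SimpleGraph V)
    (A : Set V) (part : V → ι) (P : Finset ι) (hno : ¬ ∃ f, IsIT18 G A part P f) :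
      ∃ S ⊆ P, ∃ W : Finset V, W.card + 2 ≤ 2 * S.card ∧
        ∀ v ∈ A, part v ∈ S → ∃ w ∈ W, G.Adj v w := by
  induction P using Finset.strongInduction with
  | H P ih =>
  rcases P.eq_empty_or_nonempty with rfl | ⟨p, hp⟩
  · exact (hno ⟨fun _ => Classical.arbitrary V, by simp [IsIT18]⟩).elim
  by_cases h : ∃ f, IsIT18 G A part (P.erase p) f
  · obtain ⟨S, hS, -, h⟩ := haxell18 G A part P p hp hno h
    exact ⟨S, hS, h⟩
  · obtain ⟨S, hS, h⟩ := ih _ (Finset.erase_ssubset hp) h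
    exact ⟨S, hS.trans (Finset.erase_subset _ _), h⟩



/-- If n > Δ(2 − (2d+3)/r), d+1 ≤ t ≤ r, U is a set of r − t parts, |I| ≤ 2(t−d−1) and
I dominates every part not in U, then for every vertex x there is an independent
transversal T' of the parts of U avoiding all neighbours of I ∪ {x}. -/
theorem stmt18 {V : Type} [Fintype V] (r d t n Δ : ℕ) (hdt : d + 1 ≤ t) (ht : t ≤ r)
    (G : SimpleGraph V) (part : V → Fin r)
    (hpartite : ∀ v w, G.Adj v w → part v ≠ part w)
    (hdeg : ∀ v, (G.neighborSet v).ncard ≤ Δ)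
    (hsize : ∀ i : Fin r, n ≤ ({v | part v = i} : Set V).ncard)
    (hn : (n : ℝ) > Δ * (2 - (2 * d + 3) / r))
    (I : Finset V) (U : Finset (Fin r)) (hU : U.card = r - t)
    (hI : I.card ≤ 2 * (t - d - 1))
    (hdom : ∀ v : V, part v ∉ U → ∃ u ∈ I, G.Adj v u)
    (x : V) :
    ∃ T' : Finset V,
      (∀ y ∈ T', part y ∈ U) ∧
      (∀ i ∈ U, ∃! y, y ∈ T' ∧ part y = i) ∧
      (∀ y ∈ T', ∀ z ∈ T', ¬ G.Adj y z) ∧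
      (∀ y ∈ T', ∀ z, z ∈ I ∨ z = x → ¬ G.Adj z y) := by
  classical
  haveI : Nonempty V := ⟨x⟩
  by_cases hit : ∃ f, IsIT18 G {v | ∀ z, z ∈ I ∨ z = x → ¬ G.Adj z v} part U f
  · obtain ⟨f, hf1, hf2⟩ := hit
    refine ⟨U.image f, ?_, ?_, ?_, ?_⟩
    · intro y hy
      obtain ⟨i, hi, rfl⟩ := Finset.mem_image.1 hy
      rw [(hf1 i hi).2]; exact hi
    · intro i hi
      refine ⟨f i, ⟨Finset.mem_image_of_mem f hi, (hf1 i hi).2⟩, ?_⟩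
      rintro y ⟨hy, hyi⟩
      obtain ⟨k, hk, rfl⟩ := Finset.mem_image.1 hy
      rw [(hf1 k hk).2] at hyi; rw [hyi]
    · intro y hy z hz
      obtain ⟨i, hi, rfl⟩ := Finset.mem_image.1 hy
      obtain ⟨k, hk, rfl⟩ := Finset.mem_image.1 hz
      exact hf2 i hi k hk
    · intro y hy
      obtain ⟨i, hi, rfl⟩ := Finset.mem_image.1 hy
      exact (hf1 i hi).1
  exfalso
  obtain ⟨S, hS, W, hW, hd⟩ := haxell18' G _ part U hit
  have hcB : (Uᶜ ∪ S).card = t + S.card := by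
    rw [Finset.card_union_of_disjoint, Finset.card_compl, Fintype.card_fin, hU]
    · omega
    · rw [Finset.disjoint_left]
      intro a ha haS
      exact (Finset.mem_compl.1 ha) (hS haS)
  have hsub : (Finset.univ.filter fun v => part v ∈ Uᶜ ∪ S) ⊆
      (insert x (I ∪ W)).biUnion fun z => Finset.univ.filter fun v => G.Adj z v := by
    intro v hv
    simp only [Finset.mem_filter, Finset.mem_univ, true_and, Finset.mem_union,
      Finset.mem_compl] at hv
    simp only [Finset.mem_biUnion, Finset.mem_filter, Finset.mem_univ, true_and,
      Finset.mem_insert, Finset.mem_union]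
    rcases hv with hv | hv
    · obtain ⟨u, hu, h⟩ := hdom v hv
      exact ⟨u, Or.inr (Or.inl hu), h.symm⟩
    · by_cases hA : ∀ z, z ∈ I ∨ z = x → ¬ G.Adj z v
      · obtain ⟨w, hw, h⟩ := hd v hA hv
        exact ⟨w, Or.inr (Or.inr hw), h.symm⟩
      · push Not at hA
        obtain ⟨z, hz, h⟩ := hA
        exact ⟨z, by tauto, h⟩
  have h1 := Finset.card_le_card hsub
  have h2 : ((insert x (I ∪ W)).biUnion fun z => Finset.univ.filter fun v => G.Adj z v).card
      ≤ (insert x (I ∪ W)).card * Δ := by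
    apply Finset.card_biUnion_le_card_mul
    intro z _
    have := hdeg z
    rw [Set.ncard_eq_toFinset_card'] at this
    convert this using 2
    ext v; simp
  have h3 : (Uᶜ ∪ S).card * n ≤ (Finset.univ.filter fun v => part v ∈ Uᶜ ∪ S).card := by
    rw [Finset.card_eq_sum_card_fiberwise (f := part) (t := Uᶜ ∪ S)
      (fun v hv => by simpa using hv), ← smul_eq_mul]
    apply Finset.card_nsmul_le_sum
    intro i hi
    have := hsize i
    rw [Set.ncard_eq_toFinset_card'] at this
    refine this.trans (Finset.card_le_card ?_)
    intro v hv
    have hv' : part v = i := by simpa using hv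
    rw [Finset.mem_filter, Finset.mem_filter, hv']
    exact ⟨⟨Finset.mem_univ _, hi⟩, rfl⟩
  have h4 : (insert x (I ∪ W)).card + (2 * d + 3) ≤ 2 * (t + S.card) := by
    have := Finset.card_insert_le x (I ∪ W)
    have := Finset.card_union_le I W
    omega
  have h5 : t + S.card ≤ r := by
    have := Finset.card_le_card hS
    omega
  have h6 : (t + S.card) * n ≤ (insert x (I ∪ W)).card * Δ := by
    rw [← hcB]; exact h3.trans (h1.trans h2)
  generalize (insert x (I ∪ W)).card = c at h4 h6
  have hb : 0 < t + S.card := by omega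
  generalize t + S.card = b at h4 h5 h6 hb
  have hbR : (0 : ℝ) < b := by exact_mod_cast hb
  have h4R : (c : ℝ) + (2 * d + 3) ≤ 2 * b := by exact_mod_cast h4
  have h5R : (b : ℝ) ≤ r := by exact_mod_cast h5
  have h6R : (b : ℝ) * n ≤ c * Δ := by exact_mod_cast h6
  have hΔ : (0 : ℝ) ≤ Δ := Nat.cast_nonneg _
  have hq : (b : ℝ) * ((2 * d + 3) / r) ≤ 2 * d + 3 := by
    rw [mul_div_assoc', div_le_iff₀ (by linarith), mul_comm]
    exact mul_le_mul_of_nonneg_left h5R (by positivity)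
  have h7 : (b : ℝ) * (Δ * (2 - (2 * d + 3) / r)) < b * n := mul_lt_mul_of_pos_left hn hbR
  have h8 : (c : ℝ) * Δ ≤ (b * (2 - (2 * d + 3) / r)) * Δ :=
    mul_le_mul_of_nonneg_right (by linarith) hΔ
  linarith
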